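/- Let A be a (possibly uncountable) CLO whose complete theory is ℵ₀-categorical, and let B ⊆ A be a nonempty convex subset regarded as an L_κ-structure with the induced order and unary predicates. Then the complete theory of B is ℵ₀-categorical. -/

import Mathlib

open FirstOrder Language Set

/-- Relation symbols of the language `L_κ` of colored linear orders:
a binary `<` and a unary color predicate for each `i : ι`. -/
inductive CLORel (ι : Type) : ℕ → Type
  | lt : CLORel ι 2
  | color (i : ι) : CLORel ι 1

/-- The language `L_κ`, where the colors are indexed by `ι`. -/
def CLOLang (ι : Type) : Language :=
  ⟨fun _ => Empty, CLORel ι⟩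

/-- Interpretation of the relation symbols on a linear order `M` with colors `c`. -/
def cloRelMap {ι M : Type} [LinearOrder M] (c : ι → Set M) :
    ∀ {n}, CLORel ι n → (Fin n → M) → Prop
  | _, .lt => fun v => v 0 < v 1
  | _, .color i => fun v => v 0 ∈ c i

/-- The canonical `L_κ`-structure (a colored linear order, CLO) on a linear
order `M` whose colors are given by `c : ι → Set M`. -/
def CLOStr (ι M : Type) [LinearOrder M] (c : ι → Set M) : (CLOLang ι).Structure M where
  funMap := fun f => Empty.elim f
  RelMap := cloRelMap c

/-- Satisfaction of an `L_κ`-formula in the CLO `(M, <, c)`. -/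
def Sat {ι : Type} (M : Type) [LinearOrder M] (c : ι → Set M) {α : Type}
    (φ : (CLOLang ι).Formula α) (v : α → M) : Prop :=
  letI := CLOStr ι M c
  φ.Realize v

/-- The induced colors on a subset of a CLO. -/
def subColor {ι M : Type} (c : ι → Set M) (s : Set M) : ι → Set s :=
  fun i => {x | (x : M) ∈ c i}

/-- Elementary equivalence of CLOs. -/
def CLOEquiv (ι : Type) (M : Type) [LinearOrder M] (cM : ι → Set M)
    (N : Type) [LinearOrder N] (cN : ι → Set N) : Prop :=
  letI := CLOStr ι M cM
  letI := CLOStr ι N cN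
  M ≅[CLOLang ι] N

/-- Isomorphism of CLOs (as `L_κ`-structures). -/
def CLOIso (ι : Type) (M : Type) [LinearOrder M] (cM : ι → Set M)
    (N : Type) [LinearOrder N] (cN : ι → Set N) : Prop :=
  letI := CLOStr ι M cM
  letI := CLOStr ι N cN
  Nonempty (M ≃[CLOLang ι] N)

/-- The complete theory of a CLO. -/
def CLOTheory (ι : Type) (M : Type) [LinearOrder M] (c : ι → Set M) : (CLOLang ι).Theory :=
  letI := CLOStr ι M c
  (CLOLang ι).completeTheory M

/-- The induced colors on a lexicographic sum `Σₗ i, A i` of CLOs. -/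
def sigmaColor {ι I : Type} {A : I → Type} (c : ∀ i, ι → Set (A i)) :
    ι → Set (Σₗ i, A i) :=
  fun k => {x | (ofLex x).2 ∈ c (ofLex x).1 k}

/-- The induced colors on a two-term lexicographic sum `α ⊕ₗ β` of CLOs. -/
def sumColor2 {ι α β : Type} (ca : ι → Set α) (cb : ι → Set β) : ι → Set (α ⊕ₗ β) :=
  fun k => {x | Sum.elim (· ∈ ca k) (· ∈ cb k) (ofLex x)}

/-- The set defined by a parameter-free formula in one variable in a CLO. -/
def FmlSet (ι : Type) (M : Type) [LinearOrder M] (c : ι → Set M)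
    (φ : (CLOLang ι).Formula Unit) : Set M :=
  {x | Sat M c φ fun _ => x}

/-- A CLO is self-additive if it has more than one point and its only
convex parameter-free-definable subsets are `∅` and the whole order. -/
def SelfAdditive (ι : Type) (M : Type) [LinearOrder M] (c : ι → Set M) : Prop :=
  Nontrivial M ∧
    ∀ φ : (CLOLang ι).Formula Unit, (FmlSet ι M c φ).OrdConnected →
      FmlSet ι M c φ = ∅ ∨ FmlSet ι M c φ = Set.univ

/-- `a ∼ b`: some set definable with parameter `a` is convex, bounded above and
below, and contains both `a` and `b`. -/
def SimRel (ι : Type) {M : Type} [LinearOrder M] (c : ι → Set M) (a b : M) : Prop :=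
  ∃ φ : (CLOLang ι).Formula (Unit ⊕ Unit),
    (Set.OrdConnected {x | Sat M c φ (Sum.elim (fun _ => x) fun _ => a)}) ∧
    (∃ u : M, ∀ z ∈ {x | Sat M c φ (Sum.elim (fun _ => x) fun _ => a)}, z < u) ∧
    (∃ l : M, ∀ z ∈ {x | Sat M c φ (Sum.elim (fun _ => x) fun _ => a)}, l < z) ∧
    a ∈ {x | Sat M c φ (Sum.elim (fun _ => x) fun _ => a)} ∧
    b ∈ {x | Sat M c φ (Sum.elim (fun _ => x) fun _ => a)}

/-- `f : M → N` is an elementary map of CLOs. -/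
def IsElemMap (ι : Type) {M N : Type} [LinearOrder M] [LinearOrder N]
    (cM : ι → Set M) (cN : ι → Set N) (f : M → N) : Prop :=
  ∀ (k : ℕ) (φ : (CLOLang ι).Formula (Fin k)) (v : Fin k → M),
    Sat M cM φ v ↔ Sat N cN φ (f ∘ v)

/-- A subset of a CLO, with its induced structure, is an elementary substructure. -/
def IsElemSubset (ι : Type) (B : Type) [LinearOrder B] (cB : ι → Set B) (s : Set B) : Prop :=
  IsElemMap ι (subColor cB s) cB (Subtype.val : s → B)

/-- A complete `L_κ`-theory is ℵ₀-categorical: any two at-most-countable CLO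
models of it are isomorphic.  (Finite and empty models are allowed.) -/
def Aleph0CatTheory (ι : Type) (T : (CLOLang ι).Theory) : Prop :=
  ∀ (N₁ N₂ : Type) (i₁ : LinearOrder N₁) (i₂ : LinearOrder N₂)
    (c₁ : ι → Set N₁) (c₂ : ι → Set N₂),
    Countable N₁ → Countable N₂ →
    (letI := i₁; CLOTheory ι N₁ c₁) = T → (letI := i₂; CLOTheory ι N₂ c₂) = T →
    (letI := i₁; letI := i₂; CLOIso ι N₁ c₁ N₂ c₂)

/-- `φ` is a convex formula for the complete theory of the CLO `(M₀, c₀)`: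
its realizations in every model of that theory form a convex set. -/
def ConvexFml (ι : Type) (M₀ : Type) [LinearOrder M₀] (c₀ : ι → Set M₀)
    (φ : (CLOLang ι).Formula Unit) : Prop :=
  ∀ (B : Type) (iB : LinearOrder B) (cB : ι → Set B),
    (letI := iB; CLOEquiv ι B cB M₀ c₀) → (letI := iB; Set.OrdConnected (FmlSet ι B cB φ))

/-- The set of common realizations of a set of one-variable formulas in a CLO. -/
def TypeSet (ι : Type) (M : Type) [LinearOrder M] (c : ι → Set M)
    (Φ : Set ((CLOLang ι).Formula Unit)) : Set M :=
  {x | ∀ φ ∈ Φ, Sat M c φ fun _ => x}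

/-- A set of one-variable formulas is consistent with the complete theory of
`(M₀, c₀)`: it is realized in some model of that theory. -/
def TypeConsistent (ι : Type) (M₀ : Type) [LinearOrder M₀] (c₀ : ι → Set M₀)
    (Φ : Set ((CLOLang ι).Formula Unit)) : Prop :=
  ∃ (B : Type) (iB : LinearOrder B) (cB : ι → Set B),
    (letI := iB; CLOEquiv ι B cB M₀ c₀) ∧ (letI := iB; ∃ b : B, b ∈ TypeSet ι B cB Φ)

/-- `Φ` is a convex type of the complete theory of `(M₀, c₀)`: a maximal
consistent set of convex formulas over `∅`.  `IT(T)` is the set of all such. -/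
def IsConvexType (ι : Type) (M₀ : Type) [LinearOrder M₀] (c₀ : ι → Set M₀)
    (Φ : Set ((CLOLang ι).Formula Unit)) : Prop :=
  (∀ φ ∈ Φ, ConvexFml ι M₀ c₀ φ) ∧ TypeConsistent ι M₀ c₀ Φ ∧
    ∀ ψ, ConvexFml ι M₀ c₀ ψ → TypeConsistent ι M₀ c₀ (insert ψ Φ) → ψ ∈ Φ

/-- A convex type is isolated if it contains a convex formula contained in no
other convex type. -/
def IsolatedCT (ι : Type) (M₀ : Type) [LinearOrder M₀] (c₀ : ι → Set M₀)
    (Φ : Set ((CLOLang ι).Formula Unit)) : Prop :=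
  ∃ φ ∈ Φ, ConvexFml ι M₀ c₀ φ ∧
    ∀ Ψ, IsConvexType ι M₀ c₀ Ψ → φ ∈ Ψ → Ψ = Φ

/-- A CLO is ℵ₀-saturated: every finitely-satisfiable set of formulas in one
variable over finitely many parameters is realized. -/
def Aleph0Saturated (ι : Type) (S : Type) [LinearOrder S] (cS : ι → Set S) : Prop :=
  ∀ (m : ℕ) (a : Fin m → S) (p : Set ((CLOLang ι).Formula (Unit ⊕ Fin m))),
    (∀ q : Finset ((CLOLang ι).Formula (Unit ⊕ Fin m)), ↑q ⊆ p →
      ∃ x : S, ∀ φ ∈ q, Sat S cS φ (Sum.elim (fun _ => x) a)) →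
    ∃ x : S, ∀ φ ∈ p, Sat S cS φ (Sum.elim (fun _ => x) a)

/-- A CLO is strongly ℵ₀-homogeneous: finite tuples with the same complete type
are conjugate under an automorphism. -/
def StronglyAleph0Homogeneous (ι : Type) (S : Type) [LinearOrder S] (cS : ι → Set S) : Prop :=
  ∀ (m : ℕ) (a b : Fin m → S),
    (∀ φ : (CLOLang ι).Formula (Fin m), Sat S cS φ a ↔ Sat S cS φ b) →
    ∃ g : S ≃ S, (∀ x y : S, x < y ↔ g x < g y) ∧
      (∀ (k : ι) (x : S), x ∈ cS k ↔ g x ∈ cS k) ∧ ∀ i, g (a i) = b i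

/-- Sufficiently saturated: ℵ₀-saturated and strongly ℵ₀-homogeneous. -/
def SuffSaturated (ι : Type) (S : Type) [LinearOrder S] (cS : ι → Set S) : Prop :=
  Aleph0Saturated ι S cS ∧ StronglyAleph0Homogeneous ι S cS

/-- The complete theory of `(M₀, c₀)` is locally simple: for every sufficiently
saturated model `S` and every convex type `Φ`, the theory `T_Φ = Th(Φ(S))` is
ℵ₀-categorical. -/
def LocallySimple (ι : Type) (M₀ : Type) [LinearOrder M₀] (c₀ : ι → Set M₀) : Prop :=
  ∀ (S : Type) [LinearOrder S], ∀ (cS : ι → Set S),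
    CLOEquiv ι S cS M₀ c₀ → SuffSaturated ι S cS →
    ∀ Φ, IsConvexType ι M₀ c₀ Φ →
      Aleph0CatTheory ι
        (CLOTheory ι (TypeSet ι S cS Φ) (subColor cS (TypeSet ι S cS Φ)))

/-- A finite set of pairs is a partial isomorphism of CLOs: it preserves `<`,
equality, and each color, in both directions. -/
def IsPartialIso (ι : Type) {M N : Type} [LinearOrder M] [LinearOrder N]
    (cM : ι → Set M) (cN : ι → Set N) (f : Finset (M × N)) : Prop :=
  ∀ p ∈ f, ∀ q ∈ f,
    (p.1 < q.1 ↔ p.2 < q.2) ∧ (p.1 = q.1 ↔ p.2 = q.2) ∧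
    ∀ k, p.1 ∈ cM k ↔ p.2 ∈ cN k

/-- Back-and-forth equivalence of CLOs: a nonempty family of finite partial
isomorphisms with the back-and-forth extension properties. -/
def BackForthEquiv (ι : Type) (M : Type) [LinearOrder M] (cM : ι → Set M)
    (N : Type) [LinearOrder N] (cN : ι → Set N) : Prop :=
  ∃ F : Set (Finset (M × N)), F.Nonempty ∧ (∀ f ∈ F, IsPartialIso ι cM cN f) ∧
    (∀ f ∈ F, ∀ m : M, ∃ g ∈ F, f ⊆ g ∧ ∃ n : N, (m, n) ∈ g) ∧
    (∀ f ∈ F, ∀ n : N, ∃ g ∈ F, f ⊆ g ∧ ∃ m : M, (m, n) ∈ g)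

/-- The set of complete theories `Th(Φ(A))` as `A` ranges over models of the
complete theory of `(M₀, c₀)` (including the theory of the empty structure,
in case `Φ` is omitted). -/
def TheoriesAt (ι : Type) (M₀ : Type) [LinearOrder M₀] (c₀ : ι → Set M₀)
    (Φ : Set ((CLOLang ι).Formula Unit)) : Set ((CLOLang ι).Theory) :=
  {T | ∃ (A : Type) (iA : LinearOrder A) (cA : ι → Set A),
    (letI := iA; CLOEquiv ι A cA M₀ c₀) ∧
    T = (letI := iA; CLOTheory ι (TypeSet ι A cA Φ) (subColor cA (TypeSet ι A cA Φ)))}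

/-!
By the Ryll-Nardzewski theorem, `ℵ₀`-categoricity amounts to having finitely many types of
`n`-tuples for each `n`, so this is the property to transfer from a colored linear order to its
convex subset `B`. Since pairs of intervals of `B` have finitely many types in the big structure, a
Ramsey argument yields a cofinal family of intervals of `B` each of which extends, arbitrarily far,
to members of the family with one prescribed type of the pair of intervals. In a linear order,
elementary maps inside and outside of an interval glue to an elementary map. Hence the finite maps
that are elementary in the big structure and carry the ends of one interval of the family around
their domain to the ends of another have the back-and-forth property on `B`, where convexity of `B`
keeps the new points in `B`. So the type in the big structure of a tuple of `B` together with the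
ends of an interval of the family around it determines its type in `B`.

Only the direction of Ryll-Nardzewski from categoricity to finitely many types is delicate: given
infinitely many `n`-types, one countable model realizes a limit of them, and a generic construction
yields another that omits it.
-/

universe u v w

/-! ### Types and elementary relations -/

section Types

variable {L : FirstOrder.Language.{u, v}} {M N : Type*} [L.Structure M] [L.Structure N]
  {α β : Type*}

variable (L) in
/-- The complete type over `∅` of a tuple `v` indexed by `α`: the set of formulas true of `v`. -/
def tupleType (v : α → M) : Set (L.Formula α) :=
  {φ | φ.Realize v}

theorem tupleType_comp {v : α → M} {v' : α → N} (h : tupleType L v = tupleType L v') (i : β → α) :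
    tupleType L (v ∘ i) = tupleType L (v' ∘ i) := by
  ext φ
  simpa only [tupleType, mem_ofPred_eq, Formula.realize_relabel] using Set.ext_iff.1 h (φ.relabel i)

theorem exists_mem_notMem_of_tupleType_ne {v : α → M} {v' : α → N}
    (h : tupleType L v ≠ tupleType L v') : ∃ φ ∈ tupleType L v, φ ∉ tupleType L v' := by
  contrapose! h
  refine Subset.antisymm h fun φ hφ => by_contra fun hn => ?_
  exact h φ.not hn hφ

theorem restrictFreeVar_mem_tupleType_iff [DecidableEq α] {φ : L.Formula α} {v : α → M} :
    BoundedFormula.restrictFreeVar φ id ∈ tupleType L (fun a : φ.freeVarFinset => v a) ↔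
      φ ∈ tupleType L v :=
  BoundedFormula.realize_restrictFreeVar v fun _ => rfl

variable (L M) in
/-- A structure realizes only finitely many complete `n`-types over `∅`, for every `n`. -/
def HasFinitelyManyTypes : Prop :=
  ∀ n : ℕ, (range (tupleType L : (Fin n → M) → Set (L.Formula (Fin n)))).Finite

namespace HasFinitelyManyTypes

theorem finite_range_tupleType [Finite α] (h : HasFinitelyManyTypes L M) :
    (range (tupleType L : (α → M) → Set (L.Formula α))).Finite := by
  obtain ⟨n, ⟨e⟩⟩ := Finite.exists_equiv_fin α
  let relabelType (t : Set (L.Formula (Fin n))) : Set (L.Formula α) := (Formula.relabel e) ⁻¹' t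
  refine ((h n).image relabelType).subset ?_
  rintro _ ⟨v, rfl⟩
  refine ⟨_, ⟨v ∘ e.symm, rfl⟩, ?_⟩
  ext φ
  simp only [relabelType, tupleType, mem_preimage, mem_ofPred_eq, Formula.realize_relabel,
    Function.comp_assoc, e.symm_comp_self, Function.comp_id]

theorem exists_isolating_formula [Finite α] (h : HasFinitelyManyTypes L N) (v : α → M) :
    ∃ χ ∈ tupleType L v, ∀ v' : α → N, χ ∈ tupleType L v' → tupleType L v' = tupleType L v := by
  let T : Set (Set (L.Formula α)) := range (tupleType L : (α → N) → Set (L.Formula α))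
  have : Finite T := h.finite_range_tupleType
  have separate (t : T) : ∃ φ ∈ tupleType L v, t.1 ≠ tupleType L v → φ ∉ t.1 := by
    obtain ⟨v', hv'⟩ := t.2
    by_cases ht : t.1 = tupleType L v
    · exact ⟨⊤, Formula.realize_top.2 trivial, fun hn => absurd ht hn⟩
    · rw [← hv'] at ht ⊢
      obtain ⟨φ, hφ, hφ'⟩ := exists_mem_notMem_of_tupleType_ne (Ne.symm ht)
      exact ⟨φ, hφ, fun _ => hφ'⟩
  choose φ hφ hφT using separate
  refine ⟨Formula.iInf φ, Formula.realize_iInf.2 hφ, fun v' hv' => by_contra fun hne => ?_⟩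
  exact hφT ⟨_, v', rfl⟩ hne (Formula.realize_iInf.1 hv' _)

end HasFinitelyManyTypes

variable (L) in
/-- A relation between two structures is elementary if corresponding tuples satisfy the same
formulas, that is, if it is (the graph of) a partial elementary map. The pairs themselves serve as
variables. -/
def IsElementaryRel (f : Set (M × N)) : Prop :=
  tupleType L (fun p : f => p.1.1) = tupleType L (fun p : f => p.1.2)

theorem isElementaryRel_range_iff {v : α → M} {v' : α → N} :
    IsElementaryRel L (range fun a => (v a, v' a)) ↔ tupleType L v = tupleType L v' := by
  refine ⟨fun h => tupleType_comp h (rangeFactorization _), fun h => ?_⟩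
  have hs : ∀ p : range fun a => (v a, v' a), ∃ a, (v a, v' a) = p.1 := fun p => p.2
  choose s hs using hs
  have hs' := tupleType_comp h s
  have hv : v ∘ s = fun p => p.1.1 := funext fun p => congrArg Prod.fst (hs p)
  have hv' : v' ∘ s = fun p => p.1.2 := funext fun p => congrArg Prod.snd (hs p)
  rwa [hv, hv'] at hs'

namespace IsElementaryRel

variable {f g : Set (M × N)}

theorem tupleType_eq (h : IsElementaryRel L f) {w : α → M × N} (hw : ∀ a, w a ∈ f) :
    tupleType L (fun a => (w a).1) = tupleType L (fun a => (w a).2) :=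
  tupleType_comp h fun a => ⟨w a, hw a⟩

theorem mono (h : IsElementaryRel L g) (hfg : f ⊆ g) : IsElementaryRel L f :=
  h.tupleType_eq fun p : f => hfg p.2

theorem preimage_swap (h : IsElementaryRel L f) : IsElementaryRel L (Prod.swap ⁻¹' f) :=
  (h.tupleType_eq (w := fun p : (Prod.swap ⁻¹' f : Set (N × M)) => p.1.swap) fun p => p.2).symm

theorem relMap_iff (h : IsElementaryRel L f) {n : ℕ} (r : L.Relations n) {w : Fin n → M × N}
    (hw : ∀ i, w i ∈ f) :
    Structure.RelMap r (fun i => (w i).1) ↔ Structure.RelMap r (fun i => (w i).2) := by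
  simpa only [tupleType, mem_ofPred_eq, Formula.realize_rel, Term.realize_var]
    using Set.ext_iff.1 (h.tupleType_eq hw) (r.formula fun i => Term.var i)

theorem eq_iff (h : IsElementaryRel L f) {p q : M × N} (hp : p ∈ f) (hq : q ∈ f) :
    p.1 = q.1 ↔ p.2 = q.2 := by
  have hw : ∀ i, ![p, q] i ∈ f := Fin.forall_fin_two.2 ⟨hp, hq⟩
  simpa [tupleType, Formula.realize_equal]
    using Set.ext_iff.1 (h.tupleType_eq hw) ((Term.var 0).equal (Term.var 1))

theorem of_finite_subsets (h : ∀ g ⊆ f, g.Finite → IsElementaryRel L g) : IsElementaryRel L f := by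
  classical
  ext φ
  have hsupp := (h (Subtype.val '' (φ.freeVarFinset : Set f)) (by simp)
    (φ.freeVarFinset.finite_toSet.image _)).tupleType_eq (w := fun p : φ.freeVarFinset => p.1.1)
    fun p => mem_image_of_mem _ p.2
  rw [← restrictFreeVar_mem_tupleType_iff, hsupp,
    restrictFreeVar_mem_tupleType_iff (v := fun p : f => p.1.2)]

theorem iUnion_of_directed {ι : Type*} [Nonempty ι] {f : ι → Set (M × N)}
    (hf : Directed (· ⊆ ·) f) (h : ∀ i, IsElementaryRel L (f i)) :
    IsElementaryRel L (⋃ i, f i) := by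
  refine of_finite_subsets fun g hg hfin => ?_
  obtain ⟨i, hi⟩ := hf.exists_mem_subset_of_finset_subset_biUnion (s := hfin.toFinset)
    (by rwa [hfin.coe_toFinset])
  exact (h i).mono (hfin.coe_toFinset ▸ hi)

theorem exists_union_range [Finite f] [Finite β] (h : IsElementaryRel L f)
    (hN : HasFinitelyManyTypes L N) (u : β → M) :
    ∃ u' : β → N, IsElementaryRel L (f ∪ range fun b => (u b, u' b)) := by
  obtain ⟨χ, hχ, hiso⟩ := hN.exists_isolating_formula (Sum.elim (fun p : f => p.1.1) u)
  have hex : (χ.iExs β) ∈ tupleType L (fun p : f => p.1.2) := h ▸ Formula.realize_iExs.2 ⟨u, hχ⟩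
  obtain ⟨u', hu'⟩ := Formula.realize_iExs.1 hex
  refine ⟨u', (isElementaryRel_range_iff.2 (hiso _ hu').symm).mono ?_⟩
  rintro p (hp | ⟨b, rfl⟩)
  exacts [⟨.inl ⟨p, hp⟩, rfl⟩, ⟨.inr b, rfl⟩]

theorem exists_insert [Finite f] (h : IsElementaryRel L f) (hN : HasFinitelyManyTypes L N) (x : M) :
    ∃ y : N, IsElementaryRel L (insert (x, y) f) := by
  obtain ⟨y, hy⟩ := h.exists_union_range hN fun _ : Unit => x
  exact ⟨y (), hy.mono (insert_subset (.inr ⟨(), rfl⟩) subset_union_left)⟩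

theorem exists_equiv (h : IsElementaryRel L f) (hM : ∀ x, ∃ y, (x, y) ∈ f)
    (hN : ∀ y, ∃ x, (x, y) ∈ f) : Nonempty (M ≃[L] N) := by
  choose e he using hM
  let E : M ↪ₑ[L] N := ⟨e, fun n φ v =>
    (Set.ext_iff.1 (h.tupleType_eq fun i => he (v i)) φ).symm⟩
  have hsurj : Function.Surjective E := fun y => by
    obtain ⟨x, hx⟩ := hN y
    exact ⟨x, (h.eq_iff (he x) hx).1 rfl⟩
  exact ⟨.ofBijective E ⟨E.injective, hsurj⟩, fun F v => E.map_fun F v, fun r v => E.map_rel r v⟩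

end IsElementaryRel

theorem isElementaryRel_empty (h : M ≅[L] N) : IsElementaryRel L (∅ : Set (M × N)) := by
  ext φ
  have := h.realize_sentence (φ.relabel fun p : (∅ : Set (M × N)) => p.2.elim)
  simp only [Sentence.Realize, Formula.realize_relabel] at this
  rw [Subsingleton.elim (default ∘ _) fun p : (∅ : Set (M × N)) => p.1.1,
    Subsingleton.elim (default ∘ _) fun p : (∅ : Set (M × N)) => p.1.2] at this
  exact this

theorem HasFinitelyManyTypes.of_elementarilyEquivalent (h : HasFinitelyManyTypes L M)
    (hMN : M ≅[L] N) : HasFinitelyManyTypes L N := by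
  refine fun n => (h n).subset ?_
  rintro _ ⟨v, rfl⟩
  obtain ⟨v', hv'⟩ := (isElementaryRel_empty hMN.symm).exists_union_range h v
  exact ⟨v', (isElementaryRel_range_iff.1 (hv'.mono subset_union_right)).symm⟩

end Types

section Categoricity

variable {L : FirstOrder.Language.{u, v}} {M N : Type w} [L.Structure M] [L.Structure N]

theorem HasFinitelyManyTypes.nonempty_equiv [Countable M] [Countable N]
    (hM : HasFinitelyManyTypes L M) (hN : HasFinitelyManyTypes L N) (h : M ≅[L] N) :
    Nonempty (M ≃[L] N) := by
  let P := {f : Set (M × N) // f.Finite ∧ IsElementaryRel L f}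
  have forth (x : M) : IsCofinal {f : P | ∃ y, (x, y) ∈ f.1} := fun f => by
    have := f.2.1.to_subtype
    obtain ⟨y, hy⟩ := f.2.2.exists_insert hN x
    exact ⟨⟨_, f.2.1.insert _, hy⟩, ⟨y, mem_insert _ _⟩, subset_insert _ _⟩
  have back (y : N) : IsCofinal {f : P | ∃ x, (x, y) ∈ f.1} := fun f => by
    have hfin : (Prod.swap ⁻¹' f.1).Finite := f.2.1.preimage Prod.swap_injective.injOn
    have := hfin.to_subtype
    obtain ⟨x, hx⟩ := f.2.2.preimage_swap.exists_insert hM y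
    exact ⟨⟨_, f.2.1.insert (x, y), hx.preimage_swap.mono (by
      rintro p (rfl | hp); exacts [.inl rfl, .inr hp])⟩, ⟨x, mem_insert _ _⟩, subset_insert _ _⟩
  let D : M ⊕ N → Order.Cofinal P := Sum.elim (fun x => ⟨_, forth x⟩) fun y => ⟨_, back y⟩
  have := Encodable.ofCountable (M ⊕ N)
  let s : ℕ → P := Order.sequenceOfCofinals ⟨∅, finite_empty, isElementaryRel_empty h⟩ D
  have hs : Monotone fun n => (s n).1 := Order.sequenceOfCofinals.monotone _ D
  refine (IsElementaryRel.iUnion_of_directed hs.directed_le fun n => (s n).2.2).exists_equiv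
    (fun x => ?_) fun y => ?_
  · obtain ⟨y, hy⟩ := Order.sequenceOfCofinals.encode_mem _ D (.inl x)
    exact ⟨y, mem_iUnion_of_mem _ hy⟩
  · obtain ⟨x, hx⟩ := Order.sequenceOfCofinals.encode_mem _ D (.inr y)
    exact ⟨x, mem_iUnion_of_mem _ hx⟩

variable (L M) in
/-- A structure is `ℵ₀`-categorical if all at most countable structures elementarily equivalent to
it are isomorphic; in contrast to `Cardinal.Categorical`, finite structures qualify. -/
def IsAleph0Categorical : Prop :=
  ∀ (N₁ N₂ : Type w) [L.Structure N₁] [L.Structure N₂] [Countable N₁] [Countable N₂],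
    N₁ ≅[L] M → N₂ ≅[L] M → Nonempty (N₁ ≃[L] N₂)

theorem HasFinitelyManyTypes.isAleph0Categorical (h : HasFinitelyManyTypes L M) :
    IsAleph0Categorical L M := fun _ _ _ _ _ _ h₁ h₂ =>
  (h.of_elementarilyEquivalent h₁.symm).nonempty_equiv (h.of_elementarilyEquivalent h₂.symm)
    (h₁.trans h₂.symm)

end Categoricity

/-! ### The Ryll-Nardzewski theorem -/

section Ultrafilters

open Filter

theorem exists_ultrafilter_forall_image_infinite {X Y : Type*} {f : X → Y}
    (hf : (range f).Infinite) :
    ∃ V : Ultrafilter X, ∀ e ∈ V, (f '' e).Infinite := by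
  have : NeBot (comap f cofinite) :=
    comap_neBot_iff_compl_range.2 fun h => hf (by simpa using mem_cofinite.1 h)
  refine ⟨Ultrafilter.of (comap f cofinite), fun e he hfin => ?_⟩
  have hcompl : f ⁻¹' (f '' e)ᶜ ∈ Ultrafilter.of (comap f cofinite) :=
    Ultrafilter.of_le _ (preimage_mem_comap hfin.compl_mem_cofinite)
  obtain ⟨x, hx, hx'⟩ := Ultrafilter.nonempty_of_mem (Filter.inter_mem he hcompl)
  exact hx' (mem_image_of_mem f hx)

-- The Rasiowa–Sikorski lemma for a family of conditions given as nonempty sets of points.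
theorem exists_ultrafilter_forall_exists_mem {X κ : Type*} [Countable κ] {C : Set (Set X)}
    (hC : C.Nonempty) (hCne : ∀ s ∈ C, s.Nonempty) {D : κ → Set (Set X)}
    (hD : ∀ k, ∀ s ∈ C, ∃ t ∈ C, t ⊆ s ∧ t ∈ D k) :
    ∃ U : Ultrafilter X, ∀ k, ∃ t ∈ D k, t ∈ U := by
  have := Encodable.ofCountable κ
  obtain ⟨s₀, hs₀⟩ := hC
  have dense (k : κ) : IsCofinal {t : Cᵒᵈ | (OrderDual.ofDual t).1 ∈ D k} := fun s => by
    obtain ⟨t, htC, hts, htD⟩ := hD k _ (OrderDual.ofDual s).2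
    exact ⟨OrderDual.toDual ⟨t, htC⟩, htD, hts⟩
  let E (k : κ) : Order.Cofinal Cᵒᵈ := ⟨_, dense k⟩
  let s : ℕ → Cᵒᵈ := Order.sequenceOfCofinals (OrderDual.toDual ⟨s₀, hs₀⟩) E
  let F : Filter X := ⨅ n, 𝓟 (OrderDual.ofDual (s n)).1
  have hs : Antitone fun n => (OrderDual.ofDual (s n)).1 :=
    fun _ _ hmn => Order.sequenceOfCofinals.monotone _ E hmn
  have : NeBot F := iInf_neBot_of_directed' (monotone_principal.comp_antitone hs).directed_ge
    fun n => principal_neBot_iff.2 (hCne _ (OrderDual.ofDual (s n)).2)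
  have hF (n : ℕ) : (OrderDual.ofDual (s n)).1 ∈ F := mem_iInf_of_mem n (mem_principal_self _)
  exact ⟨Ultrafilter.of F, fun k =>
    ⟨_, Order.sequenceOfCofinals.encode_mem _ E k, Ultrafilter.of_le F (hF _)⟩⟩

end Ultrafilters

section Ultrapower

open Filter

variable {L : FirstOrder.Language.{u, v}} {M : Type w} [L.Structure M] {α : Type*}

variable (L) in
/-- The average type of the tuples `v : α → M` along an ultrafilter `V`: the set of formulas true
of `V`-almost all of them. -/
def averageType (V : Ultrafilter (α → M)) : Set (L.Formula α) :=
  {φ | ∀ᶠ v : α → M in V, φ ∈ tupleType L v}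

/-- The ultrapower of `M` along an ultrafilter on a set of tuples. -/
abbrev TupleUltrapower (V : Ultrafilter (α → M)) : Type _ :=
  (V : Filter (α → M)).Product fun _ => M

/-- The element of the ultrapower represented by a function of the tuple. -/
def TupleUltrapower.germ (V : Ultrafilter (α → M)) (g : (α → M) → M) : TupleUltrapower V :=
  Quotient.mk _ g

theorem TupleUltrapower.realize_germ_iff [Nonempty M] {V : Ultrafilter (α → M)} {β : Type*}
    (φ : L.Formula β) (g : β → (α → M) → M) :
    φ.Realize (fun b => germ V (g b)) ↔ ∀ᶠ v : α → M in V, φ.Realize fun b => g b v :=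
  Ultraproduct.realize_formula_cast (u := V) φ g

/-- The tuple of coordinate functions in the ultrapower; by Łoś's theorem it realizes the average
type. -/
def coordGerm (V : Ultrafilter (α → M)) (a : α) : TupleUltrapower V :=
  TupleUltrapower.germ V fun v => v a

theorem tupleType_coordGerm [Nonempty M] (V : Ultrafilter (α → M)) :
    tupleType L (coordGerm V) = averageType L V :=
  Set.ext fun φ => TupleUltrapower.realize_germ_iff φ fun a v => v a

theorem TupleUltrapower.elementarilyEquivalent [Nonempty M] (V : Ultrafilter (α → M)) :
    TupleUltrapower V ≅[L] M :=
  elementarilyEquivalent_iff.2 fun φ => (Ultraproduct.sentence_realize φ).trans eventually_const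

theorem tupleType_elementarySubstructure (S : L.ElementarySubstructure M) (v : α → S) :
    tupleType L v = tupleType L fun a => (v a : M) :=
  Set.ext fun φ => (S.subtype.map_formula φ v).symm

theorem exists_countable_elementarySubstructure [Countable L.Symbols] {A : Set M}
    (hA : A.Countable) : ∃ S : L.ElementarySubstructure M, A ⊆ S ∧ Countable S := by
  rcases finite_or_infinite M with hM | hM
  · exact ⟨⊤, subset_univ A, inferInstance⟩
  · have hL : L.card ≤ Cardinal.aleph0 := Cardinal.mk_le_aleph0
    obtain ⟨S, hAS, hS⟩ := exists_elementarySubstructure_card_eq L A Cardinal.aleph0.{w} le_rfl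
      (by simpa using hA) (by simpa using hL) (by simp)
    exact ⟨S, hAS, Cardinal.mk_le_aleph0_iff.1 (by simpa using hS.le)⟩

theorem exists_countable_tupleType_eq_averageType [Countable L.Symbols] [Nonempty M]
    {α : Type} [Countable α] (V : Ultrafilter (α → M)) :
    ∃ (N : Type w) (_ : L.Structure N), Countable N ∧ (N ≅[L] M) ∧
      ∃ v : α → N, tupleType L v = averageType L V := by
  obtain ⟨S, hVS, hS⟩ := exists_countable_elementarySubstructure (L := L)
    (countable_range (coordGerm V))
  let v (a : α) : S := ⟨coordGerm V a, hVS (mem_range_self a)⟩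
  exact ⟨S, inferInstance, hS,
    S.elementarilyEquivalent.trans (TupleUltrapower.elementarilyEquivalent V), v,
    (tupleType_elementarySubstructure S v).trans (tupleType_coordGerm V)⟩

end Ultrapower

section Henkin

open Filter

variable {L : FirstOrder.Language.{u, v}} {M : Type w} [L.Structure M]

theorem mem_tupleType_congr {α : Type*} {φ : L.Formula α} [DecidableEq α] {v v' : α → M}
    (h : EqOn v v' φ.freeVarFinset) : φ ∈ tupleType L v ↔ φ ∈ tupleType L v' := by
  rw [← restrictFreeVar_mem_tupleType_iff, ← restrictFreeVar_mem_tupleType_iff (v := v'),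
    show (fun a : φ.freeVarFinset => v a) = fun a : φ.freeVarFinset => v' a from
      funext fun a => h a.2]

variable (L) in
/-- An ultrafilter on sequences is Henkin if every existential formula with parameters among the
terms of the sequence is, almost surely, witnessed by one of these terms. The coordinate functions
then form an elementary substructure of the ultrapower. -/
def IsHenkin (U : Ultrafilter (ℕ → M)) : Prop :=
  ∀ φ : L.Formula (ℕ ⊕ Fin 1), ∃ j, ∀ᶠ w : ℕ → M in U,
    (∃ a : M, φ.Realize (Sum.elim w fun _ => a)) → φ.Realize (Sum.elim w fun _ => w j)

theorem IsHenkin.meetsDefinable [Nonempty M] {U : Ultrafilter (ℕ → M)} (hU : IsHenkin L U) :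
    L.MeetsDefinable (range (coordGerm U)) := by
  rintro D ⟨d, hd⟩ hD
  obtain ⟨φ, hφ⟩ := definable_iff_exists_formula_sum.1 hD
  choose idx hidx using fun a : range (coordGerm U) => a.2
  let ψ : L.Formula (ℕ ⊕ Fin 1) := φ.relabel (Sum.map idx id)
  have mem_iff (g : (ℕ → M) → M) : TupleUltrapower.germ U g ∈ D ↔
      ∀ᶠ w : ℕ → M in U, ψ.Realize (Sum.elim w fun _ => g w) := by
    let g' : ℕ ⊕ Fin 1 → (ℕ → M) → M := Sum.elim (fun i w => w i) fun _ => g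
    have hidx' : coordGerm U ∘ idx = Subtype.val := funext hidx
    have hgerm : (Sum.elim (coordGerm U) fun _ => .germ U g) = fun i => .germ U (g' i) :=
      funext (by rintro (i | i) <;> rfl)
    have hcoord (w : ℕ → M) : (Sum.elim w fun _ => g w) = fun i => g' i w :=
      funext (by rintro (i | i) <;> rfl)
    calc TupleUltrapower.germ U g ∈ D
      _ ↔ φ.Realize (Sum.elim Subtype.val fun _ => .germ U g) := Set.ext_iff.1 hφ fun _ => .germ U g
      _ ↔ ψ.Realize (Sum.elim (coordGerm U) fun _ => .germ U g) := by
          rw [Formula.realize_relabel, Sum.elim_comp_map, hidx', Function.comp_id]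
      _ ↔ ∀ᶠ w : ℕ → M in U, ψ.Realize (Sum.elim w fun _ => g w) := by
          simp only [hcoord, hgerm, TupleUltrapower.realize_germ_iff]
  obtain ⟨j, hj⟩ := hU ψ
  induction d using Quotient.inductionOn with | _ g
  have hjD : coordGerm U j ∈ D := by
    refine (mem_iff _).2 ?_
    filter_upwards [hj, (mem_iff g).1 hd] with w hw hg using hw ⟨_, hg⟩
  exact ⟨_, hjD, mem_range_self j⟩

theorem IsHenkin.exists_countable_surjective [Nonempty M] {U : Ultrafilter (ℕ → M)}
    (hU : IsHenkin L U) :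
    ∃ (N : Type w) (_ : L.Structure N), Countable N ∧ (N ≅[L] M) ∧
      ∃ v : ℕ → N, Function.Surjective v ∧ tupleType L v = averageType L U := by
  let S := hU.meetsDefinable.toElementarySubstructure
  have hS : (S : Set (TupleUltrapower U)) = range (coordGerm U) := hU.meetsDefinable.closure_eq_self
  let v (i : ℕ) : S := ⟨coordGerm U i, hS.ge (mem_range_self i)⟩
  have hv : Function.Surjective v := fun ⟨x, hx⟩ => by
    obtain ⟨i, rfl⟩ := hS.le hx
    exact ⟨i, rfl⟩
  exact ⟨S, inferInstance, hv.countable,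
    S.elementarilyEquivalent.trans (TupleUltrapower.elementarilyEquivalent U), v, hv,
    (tupleType_elementarySubstructure S v).trans (tupleType_coordGerm U)⟩

variable (L M) in
/-- The forcing conditions for a generic sequence of elements of `M`: the nonempty sets of
sequences definable without parameters, of which each formula constrains finitely many terms. -/
def sequenceConditions : Set (Set (ℕ → M)) :=
  {s | s.Nonempty ∧ (∅ : Set M).Definable L s}

theorem inter_mem_sequenceConditions {s : Set (ℕ → M)} (hs : s ∈ sequenceConditions L M)
    {φ : L.Formula ℕ} {w : ℕ → M} (hw : w ∈ s) (hφ : φ.Realize w) :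
    s ∩ {w | φ.Realize w} ∈ sequenceConditions L M :=
  ⟨⟨w, hw, hφ⟩, hs.2.inter (empty_definable_iff.2 ⟨φ, rfl⟩)⟩

theorem exists_subset_forall_henkin (φ : L.Formula (ℕ ⊕ Fin 1)) {s : Set (ℕ → M)}
    (hs : s ∈ sequenceConditions L M) : ∃ t ∈ sequenceConditions L M, t ⊆ s ∧ ∃ j, ∀ w ∈ t,
      (∃ a : M, φ.Realize (Sum.elim w fun _ => a)) → φ.Realize (Sum.elim w fun _ => w j) := by
  by_cases hex : ∃ w ∈ s, ∃ a : M, φ.Realize (Sum.elim w fun _ => a)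
  · obtain ⟨w, hw, a, ha⟩ := hex
    obtain ⟨θ, rfl⟩ := empty_definable_iff.1 hs.2
    obtain ⟨j, hj⟩ := Infinite.exists_notMem_finset
      (θ.freeVarFinset ∪ φ.freeVarFinset.preimage Sum.inl Sum.inl_injective.injOn)
    simp only [Finset.mem_union, Finset.mem_preimage, not_or] at hj
    let w' := Function.update w j a
    have hw' : θ.Realize w' := (mem_tupleType_congr fun i hi =>
      Function.update_of_ne (by rintro rfl; exact hj.1 hi) a w).2 hw
    have hφ : (φ.relabel (Sum.elim id fun _ => j)).Realize w' := by
      rw [Formula.realize_relabel]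
      refine (mem_tupleType_congr ?_).2 ha
      rintro (i | i) hi
      · have hij : i ≠ j := by rintro rfl; exact hj.2 hi
        exact Function.update_of_ne hij a w
      · exact Function.update_self j a w
    refine ⟨_, inter_mem_sequenceConditions hs hw' hφ, inter_subset_left, j, fun w hw _ => ?_⟩
    have := Formula.realize_relabel.1 hw.2
    rwa [Sum.comp_elim] at this
  · exact ⟨s, hs, Subset.rfl, 0, fun w hw h => absurd ⟨w, hw, h⟩ hex⟩

theorem definable_image_comp_of_finite [Nonempty M] {α β : Type*} [Finite α] {s : Set (β → M)}
    (hs : (∅ : Set M).Definable L s) (i : α → β) :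
    (∅ : Set M).Definable L ((· ∘ i) '' s) := by
  classical
  obtain ⟨θ, rfl⟩ := empty_definable_iff.1 hs
  let F : Set β := θ.freeVarFinset ∪ range i
  have hF : Finite F := (θ.freeVarFinset.finite_toSet.union (finite_range i)).to_subtype
  let ψ : L.Formula F := BoundedFormula.restrictFreeVar θ (inclusion subset_union_left)
  have hψ (w : β → M) : ψ.Realize (w ∘ Subtype.val) ↔ θ.Realize w :=
    BoundedFormula.realize_restrictFreeVar' subset_union_left
  let i' (a : α) : F := ⟨i a, .inr (mem_range_self a)⟩
  convert! (empty_definable_iff.2 ⟨ψ, rfl⟩ : (∅ : Set M).Definable L _).image_comp i'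
  ext v
  constructor
  · rintro ⟨w, hw, rfl⟩
    exact ⟨w ∘ Subtype.val, (hψ w).2 hw, rfl⟩
  · rintro ⟨u, hu, rfl⟩
    obtain ⟨w, rfl⟩ := Subtype.val_injective.surjective_comp_right (γ := M) u
    exact ⟨w, (hψ w).1 hu, rfl⟩

theorem exists_subset_forall_notMem_tupleType [Nonempty M] {α : Type*} [Finite α]
    {V : Ultrafilter (α → M)} (hV : ∀ e ∈ V, (tupleType L '' e).Infinite) (i : α → ℕ)
    {s : Set (ℕ → M)} (hs : s ∈ sequenceConditions L M) :
    ∃ t ∈ sequenceConditions L M, t ⊆ s ∧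
      ∃ ψ ∈ averageType L V, ∀ w ∈ t, ψ ∉ tupleType L (w ∘ i) := by
  obtain ⟨χ, hχ⟩ := empty_definable_iff.1 (definable_image_comp_of_finite hs.2 i)
  by_cases heV : (· ∘ i) '' s ∈ V
  · obtain ⟨_, ⟨_, ⟨w, hw, rfl⟩, rfl⟩, _, ⟨_, ⟨w', hw', rfl⟩, rfl⟩, hne⟩ := (hV _ heV).nontrivial
    obtain ⟨φ, hφ, hφ'⟩ := exists_mem_notMem_of_tupleType_ne hne
    by_cases hφV : φ ∈ averageType L V
    · refine ⟨_, inter_mem_sequenceConditions hs hw' (φ := (φ.relabel i).not) ?_,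
        inter_subset_left, φ, hφV, fun w hw => ?_⟩
      · simpa [tupleType, Formula.realize_relabel] using hφ'
      · simpa [tupleType, Formula.realize_relabel] using hw.2
    · refine ⟨_, inter_mem_sequenceConditions hs hw (φ := φ.relabel i) ?_,
        inter_subset_left, φ.not, Ultrafilter.eventually_not.2 hφV, fun w hw => ?_⟩
      · simpa [tupleType, Formula.realize_relabel] using hφ
      · simpa [tupleType, Formula.realize_relabel] using hw.2
  · refine ⟨s, hs, Subset.rfl, χ.not, ?_, fun w hw hn => ?_⟩
    · rw [hχ] at heV
      exact Ultrafilter.eventually_not.2 heV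
    · exact hn (hχ.le (mem_image_of_mem _ hw))

theorem exists_countable_forall_tupleType_ne [Countable L.Symbols] [Nonempty M] {n : ℕ}
    {V : Ultrafilter (Fin n → M)} (hV : ∀ e ∈ V, (tupleType L '' e).Infinite) :
    ∃ (N : Type w) (_ : L.Structure N), Countable N ∧ (N ≅[L] M) ∧
      ∀ v : Fin n → N, tupleType L v ≠ averageType L V := by
  let D : L.Formula (ℕ ⊕ Fin 1) ⊕ (Fin n → ℕ) → Set (Set (ℕ → M)) := Sum.elim
    (fun φ => {t | ∃ j, ∀ w ∈ t,
      (∃ a : M, φ.Realize (Sum.elim w fun _ => a)) → φ.Realize (Sum.elim w fun _ => w j)})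
    fun i => {t | ∃ ψ ∈ averageType L V, ∀ w ∈ t, ψ ∉ tupleType L (w ∘ i)}
  obtain ⟨U, hU⟩ := exists_ultrafilter_forall_exists_mem (C := sequenceConditions L M) (D := D)
    ⟨univ, univ_nonempty, definable_univ⟩ (fun s hs => hs.1) (by
      rintro (φ | i) s hs
      exacts [exists_subset_forall_henkin φ hs, exists_subset_forall_notMem_tupleType hV i hs])
  have henkin : IsHenkin L U := fun φ => by
    obtain ⟨t, ⟨j, hj⟩, htU⟩ := hU (.inl φ)
    exact ⟨j, mem_of_superset htU hj⟩
  obtain ⟨N, _, hcount, hNM, v, hv, hvU⟩ := henkin.exists_countable_surjective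
  refine ⟨N, _, hcount, hNM, fun u hu => ?_⟩
  obtain ⟨i, rfl⟩ := hv.comp_left u
  obtain ⟨t, ⟨ψ, hψV, hψ⟩, htU⟩ := hU (.inr i)
  have hψU : ψ.relabel i ∈ averageType L U := by
    rw [← hvU, tupleType, mem_ofPred_eq, Formula.realize_relabel]
    exact hu.ge hψV
  obtain ⟨w, hwt, hw⟩ := Ultrafilter.nonempty_of_mem (inter_mem htU hψU)
  exact hψ w hwt (Formula.realize_relabel.1 hw)

theorem tupleType_comp_equiv {N : Type*} [L.Structure N] {α : Type*} (e : M ≃[L] N) (v : α → M) :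
    tupleType L (e ∘ v) = tupleType L v :=
  Set.ext fun φ => StrongHomClass.realize_formula e φ

theorem IsAleph0Categorical.hasFinitelyManyTypes [Countable L.Symbols] [Nonempty M]
    (h : IsAleph0Categorical L M) : HasFinitelyManyTypes L M := by
  refine fun n => by_contra fun hinf => ?_
  obtain ⟨V, hV⟩ := exists_ultrafilter_forall_image_infinite hinf
  obtain ⟨N₁, _, _, hN₁, v, hv⟩ := exists_countable_tupleType_eq_averageType (L := L) V
  obtain ⟨N₂, _, _, hN₂, homit⟩ := exists_countable_forall_tupleType_ne hV
  obtain ⟨e⟩ := h N₁ N₂ hN₁ hN₂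
  exact homit (e ∘ v) ((tupleType_comp_equiv e v).trans hv)

end Henkin

/-! ### Back-and-forth systems and gluing -/

section BackAndForth

variable {L : FirstOrder.Language.{u, v}} {M N : Type*} [L.Structure M] [L.Structure N]

theorem exists_eq_var_of_isRelational [L.IsRelational] {α : Type*} (t : L.Term α) :
    ∃ a, t = Term.var a := by
  cases t with
  | var a => exact ⟨a, rfl⟩
  | func F _ => exact isEmptyElim F

variable (L) in
/-- A back-and-forth system between two structures of a relational language: a family of (graphs
of) partial isomorphisms that can be extended within the family to any point of either side. -/
structure IsBackAndForth (F : Set (Set (M × N))) : Prop where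
  eq_iff : ∀ f ∈ F, ∀ p ∈ f, ∀ q ∈ f, p.1 = q.1 ↔ p.2 = q.2
  relMap_iff : ∀ f ∈ F, ∀ {n : ℕ} (r : L.Relations n) (w : Fin n → M × N), (∀ i, w i ∈ f) →
    (Structure.RelMap r (Prod.fst ∘ w) ↔ Structure.RelMap r (Prod.snd ∘ w))
  forth : ∀ f ∈ F, ∀ x, ∃ g ∈ F, f ⊆ g ∧ ∃ y, (x, y) ∈ g
  back : ∀ f ∈ F, ∀ y, ∃ g ∈ F, f ⊆ g ∧ ∃ x, (x, y) ∈ g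

namespace IsBackAndForth

variable [L.IsRelational] {F : Set (Set (M × N))}

theorem realize_iff (hF : IsBackAndForth L F) {α : Type*} {n : ℕ} (φ : L.BoundedFormula α n)
    {f : Set (M × N)} (hf : f ∈ F) {w : α → M × N} (hw : ∀ a, w a ∈ f) {xs : Fin n → M × N}
    (hxs : ∀ i, xs i ∈ f) :
    φ.Realize (Prod.fst ∘ w) (Prod.fst ∘ xs) ↔ φ.Realize (Prod.snd ∘ w) (Prod.snd ∘ xs) := by
  have hwx {n : ℕ} {f : Set (M × N)} (hw : ∀ a, w a ∈ f) {xs : Fin n → M × N}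
    (hxs : ∀ i, xs i ∈ f) : ∀ s, Sum.elim w xs s ∈ f := Sum.forall.2 ⟨hw, hxs⟩
  induction φ generalizing f with
  | falsum => rfl
  | equal t₁ t₂ =>
    obtain ⟨a, rfl⟩ := exists_eq_var_of_isRelational t₁
    obtain ⟨b, rfl⟩ := exists_eq_var_of_isRelational t₂
    simpa only [BoundedFormula.Realize, ← Sum.comp_elim, Term.realize_var] using!
      hF.eq_iff f hf _ (hwx hw hxs a) _ (hwx hw hxs b)
  | rel r ts =>
    choose a ha using fun i => exists_eq_var_of_isRelational (ts i)
    simpa only [BoundedFormula.Realize, ← Sum.comp_elim, ha, Term.realize_var] using!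
      hF.relMap_iff f hf r (fun i => Sum.elim w xs (a i)) fun i => hwx hw hxs (a i)
  | imp φ ψ ihφ ihψ =>
    exact imp_congr (ihφ hf hw hxs) (ihψ hf hw hxs)
  | all φ ih =>
    have ih' {g : Set (M × N)} (hg : g ∈ F) (hfg : f ⊆ g) {p : M × N} (hp : p ∈ g) :
        φ.Realize (Prod.fst ∘ w) (Fin.snoc (Prod.fst ∘ xs) p.1) ↔
          φ.Realize (Prod.snd ∘ w) (Fin.snoc (Prod.snd ∘ xs) p.2) := by
      have hsnoc : ∀ i, (Fin.snoc xs p : Fin _ → M × N) i ∈ g :=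
        Fin.forall_fin_succ'.2 ⟨fun i => by simpa using hfg (hxs i), by simpa using hp⟩
      simpa only [Fin.comp_snoc] using ih hg (fun a => hfg (hw a)) hsnoc
    refine ⟨fun h y => ?_, fun h x => ?_⟩
    · obtain ⟨g, hg, hfg, x, hxy⟩ := hF.back f hf y
      exact (ih' hg hfg hxy).1 (h x)
    · obtain ⟨g, hg, hfg, y, hxy⟩ := hF.forth f hf x
      exact (ih' hg hfg hxy).2 (h y)

theorem isElementaryRel (hF : IsBackAndForth L F) {f : Set (M × N)} (hf : f ∈ F) :
    IsElementaryRel L f :=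
  Set.ext fun φ => by
    simpa only [Subsingleton.elim (Prod.fst ∘ Fin.elim0) default,
      Subsingleton.elim (Prod.snd ∘ Fin.elim0) default] using!
      hF.realize_iff φ hf (w := fun p : f => p.1) (fun p => p.2) (xs := Fin.elim0) fun i => i.elim0

end IsBackAndForth

end BackAndForth

section ColoredOrders

variable {ι : Type}

namespace CLOLang

instance isRelational : (CLOLang ι).IsRelational :=
  fun _ => inferInstanceAs (IsEmpty Empty)

variable (ι) in
/-- The symbol `<` as a relation symbol of the language of colored linear orders. -/
def ltSymb : (CLOLang ι).Relations 2 :=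
  CLORel.lt

/-- The color predicate `P_i` as a relation symbol of the language of colored linear orders. -/
def colorSymb (i : ι) : (CLOLang ι).Relations 1 :=
  CLORel.color i

end CLOLang

open CLOLang

variable (ι) in
/-- A structure in the language of colored linear orders whose symbol `<` is interpreted by the
given linear order. The class leaves the colors implicit, whereas `CLOStr` takes them as data. -/
class OrderedByLT (M : Type*) [LinearOrder M] [(CLOLang ι).Structure M] : Prop where
  relMap_ltSymb : ∀ v : Fin 2 → M, Structure.RelMap (ltSymb ι) v ↔ v 0 < v 1

open OrderedByLT

variable {M N : Type*} [LinearOrder M] [(CLOLang ι).Structure M] [OrderedByLT ι M]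
  [LinearOrder N] [(CLOLang ι).Structure N] [OrderedByLT ι N]

theorem OrderedByLT.strictMono (e : M ↪[CLOLang ι] N) : StrictMono e := fun x y h =>
  (relMap_ltSymb _).1 ((e.map_rel (ltSymb ι) ![x, y]).2 ((relMap_ltSymb _).2 h))

namespace IsElementaryRel

variable {f : Set (M × N)}

theorem lt_iff (h : IsElementaryRel (CLOLang ι) f) {p q : M × N} (hp : p ∈ f) (hq : q ∈ f) :
    p.1 < q.1 ↔ p.2 < q.2 := by
  have hw : ∀ i, ![p, q] i ∈ f := Fin.forall_fin_two.2 ⟨hp, hq⟩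
  simpa [relMap_ltSymb] using h.relMap_iff (ltSymb ι) hw

theorem le_iff (h : IsElementaryRel (CLOLang ι) f) {p q : M × N} (hp : p ∈ f) (hq : q ∈ f) :
    p.1 ≤ q.1 ↔ p.2 ≤ q.2 := by
  simpa only [not_lt] using (h.lt_iff hq hp).not

end IsElementaryRel

theorem IsBackAndForth.of_lt_iff {F : Set (Set (M × N))}
    (lt_iff : ∀ f ∈ F, ∀ p ∈ f, ∀ q ∈ f, p.1 < q.1 ↔ p.2 < q.2)
    (color_iff : ∀ f ∈ F, ∀ p ∈ f, ∀ i : ι, Structure.RelMap (colorSymb i) (fun _ => p.1) ↔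
      Structure.RelMap (colorSymb i) (fun _ => p.2))
    (forth : ∀ f ∈ F, ∀ x, ∃ g ∈ F, f ⊆ g ∧ ∃ y, (x, y) ∈ g)
    (back : ∀ f ∈ F, ∀ y, ∃ g ∈ F, f ⊆ g ∧ ∃ x, (x, y) ∈ g) :
    IsBackAndForth (CLOLang ι) F where
  eq_iff f hf p hp q hq := by
    have := lt_iff f hf p hp q hq
    have := lt_iff f hf q hq p hp
    grind
  relMap_iff f hf n r w hw := by
    cases r with
    | lt => exact (relMap_ltSymb _).trans <|
        (lt_iff f hf _ (hw 0) _ (hw 1)).trans (relMap_ltSymb (Prod.snd ∘ w)).symm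
    | color i =>
      obtain ⟨p, rfl⟩ : ∃ p, w = fun _ => p :=
        ⟨w 0, funext fun i => congrArg w (Subsingleton.elim i 0)⟩
      exact color_iff f hf p (hw 0) i
  forth := forth
  back := back

end ColoredOrders

open CLOLang OrderedByLT

section Gluing

variable {L : FirstOrder.Language.{u, v}} {M N : Type*} [LinearOrder M] [L.Structure M]
  [L.Structure N]

variable (L) in
/-- A finite elementary relation `f` around and a finite elementary relation `g` inside an interval
of `M`, where both match its endpoints `l.1`, `r.1` with `l.2`, `r.2`. -/
structure IsGluable (l r : M × N) (f g : Set (M × N)) : Prop where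
  finite_outer : f.Finite
  finite_inner : g.Finite
  outer : IsElementaryRel L f
  inner : IsElementaryRel L g
  left_mem_outer : l ∈ f
  right_mem_outer : r ∈ f
  left_mem_inner : l ∈ g
  right_mem_inner : r ∈ g
  le_or_le : ∀ p ∈ f, p.1 ≤ l.1 ∨ r.1 ≤ p.1
  mem_Icc : ∀ p ∈ g, p.1 ∈ Icc l.1 r.1

namespace IsGluable

variable {l r : M × N} {f g : Set (M × N)}

theorem exists_insert (h : IsGluable L l r f g) (hN : HasFinitelyManyTypes L N) (x : M) :
    ∃ y, IsGluable L l r (insert (x, y) f) g ∨ IsGluable L l r f (insert (x, y) g) := by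
  have := h.finite_outer.to_subtype
  have := h.finite_inner.to_subtype
  by_cases hx : x ∈ Icc l.1 r.1
  · obtain ⟨y, hy⟩ := h.inner.exists_insert hN x
    exact ⟨y, .inr { h with
      finite_inner := h.finite_inner.insert _
      inner := hy
      left_mem_inner := .inr h.left_mem_inner
      right_mem_inner := .inr h.right_mem_inner
      mem_Icc := forall_mem_insert.2 ⟨hx, h.mem_Icc⟩ }⟩
  · obtain ⟨y, hy⟩ := h.outer.exists_insert hN x
    have hx' : x ≤ l.1 ∨ r.1 ≤ x := by grind
    exact ⟨y, .inl { h with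
      finite_outer := h.finite_outer.insert _
      outer := hy
      left_mem_outer := .inr h.left_mem_outer
      right_mem_outer := .inr h.right_mem_outer
      le_or_le := forall_mem_insert.2 ⟨hx', h.le_or_le⟩ }⟩

theorem exists_superset (h : IsGluable L l r f g) (hN : HasFinitelyManyTypes L N)
    (x : M) : ∃ f' g', IsGluable L l r f' g' ∧ f ∪ g ⊆ f' ∪ g' ∧ ∃ y, (x, y) ∈ f' ∪ g' := by
  obtain ⟨y, hy | hy⟩ := h.exists_insert hN x
  · exact ⟨_, _, hy, union_subset_union_left _ (subset_insert _ _), y, .inl (.inl rfl)⟩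
  · exact ⟨_, _, hy, union_subset_union_right _ (subset_insert _ _), y, .inr (.inl rfl)⟩

variable {ι : Type} [(CLOLang ι).Structure M] [OrderedByLT ι M] [LinearOrder N]
  [(CLOLang ι).Structure N] [OrderedByLT ι N]

theorem preimage_swap (h : IsGluable (CLOLang ι) l r f g) :
    IsGluable (CLOLang ι) l.swap r.swap (Prod.swap ⁻¹' f) (Prod.swap ⁻¹' g) where
  finite_outer := h.finite_outer.preimage Prod.swap_injective.injOn
  finite_inner := h.finite_inner.preimage Prod.swap_injective.injOn
  outer := h.outer.preimage_swap
  inner := h.inner.preimage_swap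
  left_mem_outer := h.left_mem_outer
  right_mem_outer := h.right_mem_outer
  left_mem_inner := h.left_mem_inner
  right_mem_inner := h.right_mem_inner
  le_or_le _ hp := (h.le_or_le _ hp).imp (h.outer.le_iff hp h.left_mem_outer).1
    (h.outer.le_iff h.right_mem_outer hp).1
  mem_Icc _ hp := (h.mem_Icc _ hp).imp (h.inner.le_iff h.left_mem_inner hp).1
    (h.inner.le_iff hp h.right_mem_inner).1

theorem lt_iff (h : IsGluable (CLOLang ι) l r f g) :
    ∀ p ∈ f ∪ g, ∀ q ∈ f ∪ g, p.1 < q.1 ↔ p.2 < q.2 := by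
  have outer_inner {p q : M × N} (hp : p ∈ f) (hq : q ∈ g) :
      (p.1 < q.1 ↔ p.2 < q.2) ∧ (q.1 < p.1 ↔ q.2 < p.2) := by
    have hpl := h.outer.lt_iff hp h.left_mem_outer
    have hlp := h.outer.lt_iff h.left_mem_outer hp
    have hpr := h.outer.lt_iff hp h.right_mem_outer
    have hrp := h.outer.lt_iff h.right_mem_outer hp
    have hlq := h.inner.lt_iff h.left_mem_inner hq
    have hqr := h.inner.lt_iff hq h.right_mem_inner
    have hp₁ := h.le_or_le p hp
    have hq₁ := h.mem_Icc q hq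
    have hq₂ : q.2 ∈ Icc l.2 r.2 := h.preimage_swap.mem_Icc q.swap hq
    grind
  rintro p (hp | hp) q (hq | hq)
  exacts [h.outer.lt_iff hp hq, (outer_inner hp hq).1, (outer_inner hq hp).2, h.inner.lt_iff hp hq]

theorem isElementaryRel_union (h : IsGluable (CLOLang ι) l r f g)
    (hM : HasFinitelyManyTypes (CLOLang ι) M) (hN : HasFinitelyManyTypes (CLOLang ι) N) :
    IsElementaryRel (CLOLang ι) (f ∪ g) := by
  have hF : IsBackAndForth (CLOLang ι)
      {k | ∃ f' g', IsGluable (CLOLang ι) l r f' g' ∧ k = f' ∪ g'} := by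
    refine .of_lt_iff ?_ ?_ ?_ ?_
    · rintro _ ⟨f, g, h, rfl⟩
      exact h.lt_iff
    · rintro _ ⟨f, g, h, rfl⟩ p (hp | hp) i
      exacts [h.outer.relMap_iff _ fun _ => hp, h.inner.relMap_iff _ fun _ => hp]
    · rintro _ ⟨f, g, h, rfl⟩ x
      obtain ⟨f', g', h', hsub, hxy⟩ := h.exists_superset hN x
      exact ⟨_, ⟨f', g', h', rfl⟩, hsub, hxy⟩
    · rintro _ ⟨f, g, h, rfl⟩ y
      obtain ⟨f', g', h', hsub, x, hxy⟩ := h.preimage_swap.exists_superset hM y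
      exact ⟨_, ⟨_, _, h'.preimage_swap, rfl⟩, fun p hp => hsub (a := p.swap) hp, x, hxy⟩
  exact hF.isElementaryRel ⟨f, g, h, rfl⟩

end IsGluable

end Gluing

/-! ### Homogeneous families of intervals -/

theorem exists_isCofinal_forall_color {P X : Type*} [Preorder P] [IsDirectedOrder P] [Nonempty P]
    {T : P → P → X} (hT : (range (Function.uncurry T)).Finite) :
    ∃ (G : Set P) (q : X), IsCofinal G ∧ ∀ r ∈ G, ∀ m, ∃ s ∈ G, m ≤ s ∧ T r s = q := by
  let U : Ultrafilter P := Ultrafilter.of Filter.atTop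
  have hU (m : P) : ∀ᶠ s in U, m ≤ s := Ultrafilter.of_le _ (Filter.eventually_ge_atTop m)
  have hcolor (r : P) : ∃ q ∈ range (Function.uncurry T), ∀ᶠ s in U, T r s = q :=
    (U.eventually_exists_mem_iff hT).1 (.of_forall fun s => ⟨_, ⟨(r, s), rfl⟩, rfl⟩)
  choose c hcT hc using hcolor
  obtain ⟨q, -, hq⟩ := (U.eventually_exists_mem_iff (P := fun q r => c r = q) hT).1
    (.of_forall fun r => ⟨_, hcT r, rfl⟩)
  refine ⟨{r | c r = q}, q, fun m => ?_, fun r hr m => ?_⟩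
  · obtain ⟨s, hs, hms⟩ := (hq.and (hU m)).exists
    exact ⟨s, hs, hms⟩
  · obtain ⟨s, hs, hms, hrs⟩ := (hq.and ((hU m).and (hc r))).exists
    exact ⟨s, hs, hms, hrs.trans hr⟩

section Intervals

variable {ι : Type} {M B : Type*} [(CLOLang ι).Structure M]
  [LinearOrder B] [(CLOLang ι).Structure B] (e : B ↪[CLOLang ι] M)

/-- The type in `M` of the endpoints of two intervals of `B`. -/
def intervalPairType (I J : NonemptyInterval B) : Set ((CLOLang ι).Formula (Fin 4)) :=
  tupleType (CLOLang ι) ![e I.fst, e I.snd, e J.fst, e J.snd]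

/-- A family of intervals is homogeneous if each member extends, arbitrarily far, to further members
with one and the same type of the pair. -/
def IsHomogeneousFamily (G : Set (NonemptyInterval B)) : Prop :=
  ∃ q, ∀ I ∈ G, ∀ K, ∃ J ∈ G, K ≤ J ∧ intervalPairType e I J = q

theorem exists_isCofinal_isHomogeneousFamily [Nonempty B]
    (hM : HasFinitelyManyTypes (CLOLang ι) M) :
    ∃ G : Set (NonemptyInterval B), IsCofinal G ∧ IsHomogeneousFamily e G := by
  have hfin : (range (Function.uncurry (intervalPairType e))).Finite := (hM 4).subset <| by
    rintro _ ⟨⟨I, J⟩, rfl⟩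
    exact ⟨_, rfl⟩
  obtain ⟨G, q, hG, hq⟩ := exists_isCofinal_forall_color hfin
  exact ⟨G, hG, q, hq⟩

/-- A finite relation on `B` that is elementary in the larger order `M` and matches the endpoints of
an interval `I` around its domain with those of `J`. -/
structure IsEndMatched (I J : NonemptyInterval B) (h : Set (B × B)) : Prop where
  finite : h.Finite
  elementary : IsElementaryRel (CLOLang ι) (Prod.map e e '' h)
  fst_mem : (I.fst, J.fst) ∈ h
  snd_mem : (I.snd, J.snd) ∈ h
  fst_mem_interval : ∀ p ∈ h, p.1 ∈ I

namespace IsEndMatched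

variable {e} {I J I' J' : NonemptyInterval B} {h : Set (B × B)}

theorem relMap_colorSymb_iff (hh : IsEndMatched e I J h) {p : B × B} (hp : p ∈ h) (i : ι) :
    Structure.RelMap (colorSymb i) (fun _ => p.1) ↔
      Structure.RelMap (colorSymb i) (fun _ => p.2) := by
  rw [← e.map_rel, ← e.map_rel]
  exact hh.elementary.relMap_iff (colorSymb i) fun _ => mem_image_of_mem (Prod.map e e) hp

variable [LinearOrder M] [OrderedByLT ι M] [OrderedByLT ι B]

theorem lt_iff (hh : IsEndMatched e I J h) {p q : B × B} (hp : p ∈ h) (hq : q ∈ h) :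
    p.1 < q.1 ↔ p.2 < q.2 := by
  simpa only [Prod.map, (OrderedByLT.strictMono e).lt_iff_lt] using
    hh.elementary.lt_iff (mem_image_of_mem _ hp) (mem_image_of_mem _ hq)

theorem le_iff (hh : IsEndMatched e I J h) {p q : B × B} (hp : p ∈ h) (hq : q ∈ h) :
    p.1 ≤ q.1 ↔ p.2 ≤ q.2 := by
  simpa only [not_lt] using (hh.lt_iff hq hp).not

theorem preimage_swap (hh : IsEndMatched e I J h) : IsEndMatched e J I (Prod.swap ⁻¹' h) where
  finite := hh.finite.preimage Prod.swap_injective.injOn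
  elementary := hh.elementary.preimage_swap.mono <| by
    rintro _ ⟨p, hp, rfl⟩
    exact ⟨p.swap, hp, rfl⟩
  fst_mem := hh.fst_mem
  snd_mem := hh.snd_mem
  fst_mem_interval _ hp := (hh.fst_mem_interval _ hp).imp (hh.le_iff hh.fst_mem hp).1
    (hh.le_iff hp hh.snd_mem).1

theorem insert_endpoints (hh : IsEndMatched e I J h) (hM : HasFinitelyManyTypes (CLOLang ι) M)
    (hI : I ≤ I') (hJ : intervalPairType e I I' = intervalPairType e J J') :
    IsEndMatched e I' J' (insert (I'.fst, J'.fst) (insert (I'.snd, J'.snd) h)) := by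
  have mono : StrictMono e := OrderedByLT.strictMono e
  let f : Set (M × M) := range fun a =>
    (![e I.fst, e I.snd, e I'.fst, e I'.snd] a, ![e J.fst, e J.snd, e J'.fst, e J'.snd] a)
  have hglue : IsGluable (CLOLang ι) (e I.fst, e J.fst) (e I.snd, e J.snd) f
      (Prod.map e e '' h) := {
    finite_outer := finite_range _
    finite_inner := hh.finite.image _
    outer := isElementaryRel_range_iff.2 hJ
    inner := hh.elementary
    left_mem_outer := ⟨0, rfl⟩
    right_mem_outer := ⟨1, rfl⟩
    left_mem_inner := ⟨_, hh.fst_mem, rfl⟩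
    right_mem_inner := ⟨_, hh.snd_mem, rfl⟩
    le_or_le := by
      rintro _ ⟨a, rfl⟩
      fin_cases a
      exacts [.inl le_rfl, .inr le_rfl, .inl (mono.monotone hI.1), .inr (mono.monotone hI.2)]
    mem_Icc := by
      rintro _ ⟨p, hp, rfl⟩
      exact (hh.fst_mem_interval p hp).imp (mono.monotone ·) (mono.monotone ·) }
  refine ⟨(hh.finite.insert _).insert _, (hglue.isElementaryRel_union hM hM).mono ?_, .inl rfl,
    .inr (.inl rfl), ?_⟩
  · simp only [image_insert_eq, Prod.map_apply]
    exact insert_subset (.inl ⟨2, rfl⟩) (insert_subset (.inl ⟨3, rfl⟩) subset_union_right)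
  · exact forall_mem_insert.2 ⟨⟨le_rfl, I'.fst_le_snd⟩, forall_mem_insert.2
      ⟨⟨I'.fst_le_snd, le_rfl⟩, fun p hp =>
        NonemptyInterval.coe_subset_coe.2 hI (hh.fst_mem_interval p hp)⟩⟩

theorem exists_insert (hh : IsEndMatched e I J h) (hM : HasFinitelyManyTypes (CLOLang ι) M)
    (he : (range e).OrdConnected) {x : B} (hx : x ∈ I) :
    ∃ y, IsEndMatched e I J (insert (x, y) h) := by
  have := (hh.finite.image (Prod.map e e)).to_subtype
  obtain ⟨y, hy⟩ := hh.elementary.exists_insert hM (e x)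
  have mono : StrictMono e := OrderedByLT.strictMono e
  have hfst : (e I.fst, e J.fst) ∈ insert (e x, y) (Prod.map e e '' h) := .inr ⟨_, hh.fst_mem, rfl⟩
  have hsnd : (e I.snd, e J.snd) ∈ insert (e x, y) (Prod.map e e '' h) := .inr ⟨_, hh.snd_mem, rfl⟩
  obtain ⟨y, rfl⟩ : y ∈ range e := he.out (mem_range_self J.fst) (mem_range_self J.snd)
    ⟨(hy.le_iff hfst (.inl rfl)).1 (mono.monotone hx.1),
      (hy.le_iff (.inl rfl) hsnd).1 (mono.monotone hx.2)⟩
  refine ⟨y, hh.finite.insert _, ?_, .inr hh.fst_mem, .inr hh.snd_mem,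
    forall_mem_insert.2 ⟨hx, hh.fst_mem_interval⟩⟩
  rwa [image_insert_eq]

theorem exists_superset {G : Set (NonemptyInterval B)} (hh : IsEndMatched e I J h) (hI : I ∈ G)
    (hJ : J ∈ G) (hG : IsHomogeneousFamily e G) (hM : HasFinitelyManyTypes (CLOLang ι) M)
    (he : (range e).OrdConnected) (x : B) :
    ∃ I' ∈ G, ∃ J' ∈ G, ∃ h', IsEndMatched e I' J' h' ∧ h ⊆ h' ∧ ∃ y, (x, y) ∈ h' := by
  obtain ⟨q, hq⟩ := hG
  obtain ⟨I', hI', hle, hII'⟩ := hq I hI (I ⊔ .pure x)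
  obtain ⟨J', hJ', -, hJJ'⟩ := hq J hJ J
  have hx : x ∈ I' := (le_sup_right.trans hle : NonemptyInterval.pure x ≤ I')
  obtain ⟨y, hy⟩ := (hh.insert_endpoints hM (le_sup_left.trans hle)
    (hII'.trans hJJ'.symm)).exists_insert hM he hx
  exact ⟨I', hI', J', hJ', _, hy, fun p hp => .inr (.inr (.inr hp)), y, .inl rfl⟩

theorem isElementaryRel {G : Set (NonemptyInterval B)} (hh : IsEndMatched e I J h) (hI : I ∈ G)
    (hJ : J ∈ G) (hG : IsHomogeneousFamily e G) (hM : HasFinitelyManyTypes (CLOLang ι) M)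
    (he : (range e).OrdConnected) : IsElementaryRel (CLOLang ι) h := by
  have hF : IsBackAndForth (CLOLang ι) {h | ∃ I ∈ G, ∃ J ∈ G, IsEndMatched e I J h} := by
    refine .of_lt_iff ?_ ?_ ?_ ?_
    · rintro h ⟨I, -, J, -, hh⟩ p hp q hq
      exact hh.lt_iff hp hq
    · rintro h ⟨I, -, J, -, hh⟩ p hp i
      exact hh.relMap_colorSymb_iff hp i
    · rintro h ⟨I, hI, J, hJ, hh⟩ x
      obtain ⟨I', hI', J', hJ', h', hh', hsub, hxy⟩ := hh.exists_superset hI hJ hG hM he x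
      exact ⟨h', ⟨I', hI', J', hJ', hh'⟩, hsub, hxy⟩
    · rintro h ⟨I, hI, J, hJ, hh⟩ y
      obtain ⟨J', hJ', I', hI', h', hh', hsub, x, hxy⟩ :=
        hh.preimage_swap.exists_superset hJ hI hG hM he y
      exact ⟨_, ⟨I', hI', J', hJ', hh'.preimage_swap⟩, fun p hp => hsub (a := p.swap) hp, x, hxy⟩
  exact hF.isElementaryRel ⟨I, hI, J, hJ, hh⟩

end IsEndMatched

variable [LinearOrder M] [OrderedByLT ι M] [OrderedByLT ι B]

theorem tupleType_eq_of_intervals {G : Set (NonemptyInterval B)} (hG : IsHomogeneousFamily e G)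
    (hM : HasFinitelyManyTypes (CLOLang ι) M) (he : (range e).OrdConnected) {α : Type*} [Finite α]
    {v v' : α → B} {I I' : NonemptyInterval B} (hI : I ∈ G) (hI' : I' ∈ G) (hv : ∀ a, v a ∈ I)
    (h : tupleType (CLOLang ι) (e ∘ Sum.elim v ![I.fst, I.snd]) =
      tupleType (CLOLang ι) (e ∘ Sum.elim v' ![I'.fst, I'.snd])) :
    tupleType (CLOLang ι) v = tupleType (CLOLang ι) v' := by
  let k : Set (B × B) :=
    range fun s => (Sum.elim v ![I.fst, I.snd] s, Sum.elim v' ![I'.fst, I'.snd] s)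
  have hk : IsEndMatched e I I' k := {
    finite := finite_range _
    elementary := by
      rw [← range_comp]
      exact isElementaryRel_range_iff.2 h
    fst_mem := ⟨.inr 0, rfl⟩
    snd_mem := ⟨.inr 1, rfl⟩
    fst_mem_interval := by
      rintro _ ⟨a | a, rfl⟩
      · exact hv a
      · fin_cases a
        exacts [⟨le_rfl, I.fst_le_snd⟩, ⟨I.fst_le_snd, le_rfl⟩] }
  exact (hk.isElementaryRel hI hI' hG hM he).tupleType_eq fun a => ⟨.inl a, rfl⟩

theorem exists_nonemptyInterval_forall_mem [Nonempty B] {α : Type*} [Finite α] (v : α → B) :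
    ∃ I : NonemptyInterval B, ∀ a, v a ∈ I := by
  obtain ⟨I, hI⟩ := (finite_range fun a => NonemptyInterval.pure (v a)).bddAbove
  exact ⟨I, fun a => hI (mem_range_self a)⟩

theorem HasFinitelyManyTypes.of_ordConnected_range [Nonempty B]
    (hM : HasFinitelyManyTypes (CLOLang ι) M) (he : (range e).OrdConnected) :
    HasFinitelyManyTypes (CLOLang ι) B := by
  obtain ⟨G, hcof, hG⟩ := exists_isCofinal_isHomogeneousFamily e hM
  intro n
  have hhull (v : Fin n → B) : ∃ I ∈ G, ∀ a, v a ∈ I := by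
    obtain ⟨K, hK⟩ := exists_nonemptyInterval_forall_mem v
    obtain ⟨I, hI, hKI⟩ := hcof K
    exact ⟨I, hI, fun a => NonemptyInterval.coe_subset_coe.2 hKI (hK a)⟩
  choose I hI hv using hhull
  let outerType (v : Fin n → B) : Set ((CLOLang ι).Formula (Fin n ⊕ Fin 2)) :=
    tupleType (CLOLang ι) (e ∘ Sum.elim v ![(I v).fst, (I v).snd])
  have hfactor : Function.FactorsThrough (tupleType (CLOLang ι)) outerType := fun v v' =>
    tupleType_eq_of_intervals e hG hM he (hI v) (hI v') (hv v)
  have hfin : (range outerType).Finite := hM.finite_range_tupleType.subset <| by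
    rintro _ ⟨v, rfl⟩
    exact ⟨_, rfl⟩
  rw [← hfactor.extend_comp fun _ => ∅, range_comp]
  exact hfin.image _

end Intervals

/-! ### Categoricity of theories of colored linear orders -/

section StrictTotalOrders

variable {L : FirstOrder.Language.{u, v}} {M : Type*} [L.Structure M] {r : L.Relations 2}

/-- The sentence stating that a binary relation symbol defines a strict total order. -/
def strictTotalOrderSentence (r : L.Relations 2) : L.Sentence :=
  r.irreflexive ⊓ r.transitive ⊓
    ∀' ∀' (r.boundedFormula₂ (&0) &1 ⊔ r.boundedFormula₂ (&1) &0 ⊔ &0 =' &1)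

theorem realize_strictTotalOrderSentence :
    M ⊨ strictTotalOrderSentence r ↔
      IsStrictTotalOrder M fun x y => Structure.RelMap r ![x, y] := by
  have htri : M ⊨ (∀' ∀' (r.boundedFormula₂ (&0) &1 ⊔ r.boundedFormula₂ (&1) &0 ⊔ &0 =' &1) :
      L.Sentence) ↔ Std.Trichotomous fun x y : M => Structure.RelMap r ![x, y] := by
    simp [Sentence.Realize, Formula.Realize, trichotomous_def, Fin.snoc, or_iff_not_imp_left]
  rw [strictTotalOrderSentence, Sentence.Realize, Formula.realize_inf, Formula.realize_inf]
  refine (and_congr (and_congr Relations.realize_irreflexive Relations.realize_transitive)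
    htri).trans ?_
  exact ⟨fun ⟨⟨_, _⟩, _⟩ => {}, fun _ => ⟨⟨inferInstance, inferInstance⟩, inferInstance⟩⟩

end StrictTotalOrders

section ColoredOrderStructures

variable {ι : Type}

theorem isStrictTotalOrder_relMap_ltSymb {M : Type*} [LinearOrder M] [(CLOLang ι).Structure M]
    [OrderedByLT ι M] :
    IsStrictTotalOrder M fun x y => Structure.RelMap (ltSymb ι) ![x, y] := by
  have : (fun x y : M => Structure.RelMap (ltSymb ι) ![x, y]) = (· < ·) := by
    ext x y
    exact relMap_ltSymb _
  rw [this]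
  infer_instance

theorem exists_CLOStr_eq {N : Type} (S : (CLOLang ι).Structure N)
    (hN : IsStrictTotalOrder N fun x y => Structure.RelMap (ltSymb ι) ![x, y]) :
    ∃ (_ : LinearOrder N) (d : ι → Set N), CLOStr ι N d = S := by
  classical
  refine ⟨linearOrderOfSTO fun x y => Structure.RelMap (ltSymb ι) ![x, y],
    fun i => {x | Structure.RelMap (colorSymb i) ![x]}, ?_⟩
  ext n s v
  · exact s.elim
  · cases s with
    | lt => exact iff_of_eq (congrArg (S.RelMap (ltSymb ι)) (FinVec.etaExpand_eq v))
    | color i => exact iff_of_eq (congrArg (S.RelMap (colorSymb i)) (FinVec.etaExpand_eq v))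

theorem orderedByLT_CLOStr {M : Type} [LinearOrder M] (c : ι → Set M) :
    letI := CLOStr ι M c
    OrderedByLT ι M :=
  letI := CLOStr ι M c
  ⟨fun _ => Iff.rfl⟩

theorem exists_CLOStr_eq_of_elementarilyEquivalent {M N : Type} [LinearOrder M]
    [(CLOLang ι).Structure M] [OrderedByLT ι M] {S : (CLOLang ι).Structure N}
    (h : N ≅[CLOLang ι] M) : ∃ (_ : LinearOrder N) (d : ι → Set N), CLOStr ι N d = S :=
  exists_CLOStr_eq S <| realize_strictTotalOrderSentence.1 <| (h.realize_sentence _).2 <|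
    realize_strictTotalOrderSentence.2 isStrictTotalOrder_relMap_ltSymb

theorem aleph0CatTheory_iff {M : Type} [LinearOrder M] (c : ι → Set M) :
    Aleph0CatTheory ι (CLOTheory ι M c) ↔
      letI := CLOStr ι M c
      IsAleph0Categorical (CLOLang ι) M := by
  let := CLOStr ι M c
  have := orderedByLT_CLOStr c
  constructor
  · intro h N₁ N₂ _ _ hN₁ hN₂ h₁ h₂
    obtain ⟨i₁, c₁, rfl⟩ := exists_CLOStr_eq_of_elementarilyEquivalent h₁
    obtain ⟨i₂, c₂, rfl⟩ := exists_CLOStr_eq_of_elementarilyEquivalent h₂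
    exact h N₁ N₂ i₁ i₂ c₁ c₂ hN₁ hN₂ h₁ h₂
  · intro h N₁ N₂ _ _ c₁ c₂ _ _ h₁ h₂
    let := CLOStr ι N₁ c₁
    let := CLOStr ι N₂ c₂
    exact h N₁ N₂ h₁ h₂

instance CLOLang.countable_symbols [Countable ι] : Countable (CLOLang ι).Symbols := by
  have hrel (n : ℕ) : Countable ((CLOLang ι).Relations n) := by
    let color? : CLORel ι n → Option ι
      | .lt => none
      | .color i => some i
    refine Function.Injective.countable (f := color?) fun r s h => ?_
    cases r <;> cases s <;> simp_all [color?] <;> rfl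
  have hfun (n : ℕ) : Countable ((CLOLang ι).Functions n) := inferInstanceAs (Countable Empty)
  exact inferInstanceAs (Countable (_ ⊕ _))

/-- The inclusion of a subset of a CLO with the induced structure. -/
def CLOStr.subtype {M : Type} [LinearOrder M] (c : ι → Set M) (B : Set M) :
    letI := CLOStr ι M c
    letI := CLOStr ι B (subColor c B)
    B ↪[CLOLang ι] M :=
  letI := CLOStr ι M c
  letI := CLOStr ι B (subColor c B)
  { toFun := Subtype.val
    inj' := Subtype.val_injective
    map_fun' := fun f => f.elim
    map_rel' := fun r _ => by cases r <;> rfl }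

end ColoredOrderStructures

theorem stmt5 {ι : Type} [Countable ι] {M : Type} [LinearOrder M] (c : ι → Set M)
    (hM : Aleph0CatTheory ι (CLOTheory ι M c))
    (B : Set M) (hB : B.OrdConnected) (hne : B.Nonempty) :
    Aleph0CatTheory ι (CLOTheory ι (↥B) (subColor c B)) := by
  let := CLOStr ι M c
  let := CLOStr ι B (subColor c B)
  have := orderedByLT_CLOStr c
  have := orderedByLT_CLOStr (subColor c B)
  have : Nonempty M := hne.to_type
  have : Nonempty B := hne.to_subtype
  have hrange : (range (CLOStr.subtype c B)).OrdConnected := Subtype.range_coe.symm ▸ hB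
  have htypes : HasFinitelyManyTypes (CLOLang ι) M :=
    ((aleph0CatTheory_iff c).1 hM).hasFinitelyManyTypes
  exact (aleph0CatTheory_iff _).2 (htypes.of_ordConnected_range _ hrange).isAleph0Categorical
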